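/- For all integers n, k ≥ 1, the number of flattened Catalan words of length n with exactly k runs of ascents equals the sum over j from 0 to k−1 of C(n−1, 2k−j−2) · C(2k−j−2, j), where C denotes the binomial coefficient. -/

import Mathlib

/-- `w : ℕ → ℕ` encodes a Catalan word of length `n` (0-indexed letters
`w 0, w 1, …, w (n-1)`): the first letter is `0`, each letter is at most the
previous one plus one, and `w` is normalized to vanish at positions `≥ n`. -/
def IsCatalanWord (n : ℕ) (w : ℕ → ℕ) : Prop :=
  w 0 = 0 ∧ (∀ i, i + 1 < n → w (i + 1) ≤ w i + 1) ∧ ∀ i, n ≤ i → w i = 0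

/-- `j` is the starting position of one of the maximal weakly increasing
contiguous subwords (runs of weak ascents) of the length-`n` word `w`. -/
def IsRunStart (n : ℕ) (w : ℕ → ℕ) (j : ℕ) : Prop :=
  j < n ∧ (j = 0 ∨ w j < w (j - 1))

/-- A word is flattened when the leading terms of its maximal weakly increasing
contiguous subwords, read from left to right, form a weakly increasing sequence. -/
def IsFlattened (n : ℕ) (w : ℕ → ℕ) : Prop :=
  ∀ i j, IsRunStart n w i → IsRunStart n w j → i ≤ j → w i ≤ w j

/-- The set of flattened Catalan words of length `n`. -/
def FlatCat (n : ℕ) : Set (ℕ → ℕ) := {w | IsCatalanWord n w ∧ IsFlattened n w}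

/-- Number of maximal strictly increasing contiguous subwords (runs of ascents):
`1 + #{ i : w_i ≥ w_{i+1} }`. -/
noncomputable def runsAsc (n : ℕ) (w : ℕ → ℕ) : ℕ :=
  1 + {i : ℕ | i + 1 < n ∧ w (i + 1) ≤ w i}.ncard

/-- Number of maximal weakly increasing contiguous subwords (runs of weak
ascents): `1 + #{ i : w_i > w_{i+1} }`. -/
noncomputable def wruns (n : ℕ) (w : ℕ → ℕ) : ℕ :=
  1 + {i : ℕ | i + 1 < n ∧ w (i + 1) < w i}.ncard

/-- Number of maximal strictly decreasing contiguous subwords (runs of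
descents): `1 + #{ i : w_i ≤ w_{i+1} }`. -/
noncomputable def runsDesc (n : ℕ) (w : ℕ → ℕ) : ℕ :=
  1 + {i : ℕ | i + 1 < n ∧ w i ≤ w (i + 1)}.ncard

/-- Number of maximal weakly decreasing contiguous subwords (runs of weak
descents): `1 + #{ i : w_i < w_{i+1} }`. -/
noncomputable def wrunsDesc (n : ℕ) (w : ℕ → ℕ) : ℕ :=
  1 + {i : ℕ | i + 1 < n ∧ w i < w (i + 1)}.ncard

/-- An `ℓ`-valley `a b^ℓ (b+1)` (with `a > b`) occurring at position `i` of the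
length-`n` word `w`. -/
def IsLValley (n : ℕ) (w : ℕ → ℕ) (ℓ i : ℕ) : Prop :=
  i + ℓ + 1 < n ∧ w (i + 1) < w i ∧ (∀ t, 1 ≤ t → t ≤ ℓ → w (i + t) = w (i + 1)) ∧
    w (i + ℓ + 1) = w (i + 1) + 1

/-- Number of `ℓ`-valleys of `w`. -/
noncomputable def lValleyCount (n : ℕ) (w : ℕ → ℕ) (ℓ : ℕ) : ℕ :=
  {i : ℕ | IsLValley n w ℓ i}.ncard

/-- Number of valleys of `w` (all `ℓ`-valleys, `ℓ ≥ 1`). -/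
noncomputable def valleyCount (n : ℕ) (w : ℕ → ℕ) : ℕ :=
  {p : ℕ × ℕ | 1 ≤ p.2 ∧ IsLValley n w p.2 p.1}.ncard

/-- A symmetric valley `a (a-1)^ℓ a` (with `ℓ ≥ 1`) occurring at position `i`. -/
def IsSymValley (n : ℕ) (w : ℕ → ℕ) (ℓ i : ℕ) : Prop :=
  i + ℓ + 1 < n ∧ w i = w (i + 1) + 1 ∧ (∀ t, 1 ≤ t → t ≤ ℓ → w (i + t) = w (i + 1)) ∧
    w (i + ℓ + 1) = w i

/-- Number of symmetric valleys of `w` (over all `ℓ ≥ 1`). -/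
noncomputable def symValleyCount (n : ℕ) (w : ℕ → ℕ) : ℕ :=
  {p : ℕ × ℕ | 1 ≤ p.2 ∧ IsSymValley n w p.2 p.1}.ncard

/-- An `ℓ`-peak `a (a+1)^ℓ b` (with `a ≥ b`) occurring at position `i` of the
length-`n` word `w`. -/
def IsLPeak (n : ℕ) (w : ℕ → ℕ) (ℓ i : ℕ) : Prop :=
  i + ℓ + 1 < n ∧ (∀ t, 1 ≤ t → t ≤ ℓ → w (i + t) = w i + 1) ∧ w (i + ℓ + 1) ≤ w i

/-- Number of `ℓ`-peaks of `w`. -/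
noncomputable def lPeakCount (n : ℕ) (w : ℕ → ℕ) (ℓ : ℕ) : ℕ :=
  {i : ℕ | IsLPeak n w ℓ i}.ncard

/-- Number of peaks of `w` (all `ℓ`-peaks, `ℓ ≥ 1`). -/
noncomputable def peakCount (n : ℕ) (w : ℕ → ℕ) : ℕ :=
  {p : ℕ × ℕ | 1 ≤ p.2 ∧ IsLPeak n w p.2 p.1}.ncard

/-- A symmetric peak `a (a+1)^ℓ a` (with `ℓ ≥ 1`) occurring at position `i`. -/
def IsSymPeak (n : ℕ) (w : ℕ → ℕ) (ℓ i : ℕ) : Prop :=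
  i + ℓ + 1 < n ∧ (∀ t, 1 ≤ t → t ≤ ℓ → w (i + t) = w i + 1) ∧ w (i + ℓ + 1) = w i

/-- Number of symmetric peaks of `w` (over all `ℓ ≥ 1`). -/
noncomputable def symPeakCount (n : ℕ) (w : ℕ → ℕ) : ℕ :=
  {p : ℕ × ℕ | 1 ≤ p.2 ∧ IsSymPeak n w p.2 p.1}.ncard

/-!
A flattened Catalan word with last letter `a`, whose last weakly increasing run starts with `b`, is
extended by one letter `v` in exactly the cases `b ≤ v ≤ a + 1`. If `w` has `c` weak descents
`w i ≥ w (i + 1)`, give it the weight `X ^ (2 * c) * (1 + d * X)`, where `d = a - b`. Among the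
extensions, the `d` letters `v < a` start a new run and contribute `X ^ (2 * c + 2)` each, the
letter `a` contributes `X ^ (2 * c + 2) * (1 + d * X)`, and the letter `a + 1` contributes
`X ^ (2 * c) * (1 + (d + 1) * X)`. The total is the weight of `w` times `1 + X + X ^ 2`, so the
words of length `N + 1` have total weight `(1 + X + X ^ 2) ^ N`. In even degrees the weight only
records the number of weak descents, hence the coefficient of `X ^ (2 * m)` counts the words with
`m` weak descents, that is, with `m + 1` runs of ascents.
-/

open Finset Polynomial

theorem injOn_update_of_apply_eq {α β : Type*} [DecidableEq α] (a : α) (c : β) :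
    Set.InjOn (fun p : (_ : α → β) × β => Function.update p.1 a p.2) {p | p.1 a = c} := by
  have update_update_eq {f : α → β} (b : β) (hf : f a = c) :
      Function.update (Function.update f a b) a c = f := by
    rw [Function.update_idem, ← hf, Function.update_eq_self]
  rintro ⟨f, b⟩ (hf : f a = c) ⟨g, d⟩ (hg : g a = c)
    (h : Function.update f a b = Function.update g a d)
  have hbd : b = d := by simpa only [Function.update_self] using congrFun h a
  have hfg : f = g := by rw [← update_update_eq b hf, h, update_update_eq d hg]
  rw [hbd, hfg]

section TrinomialCoefficients

theorem coeff_one_add_X_add_X_sq_pow {R : Type*} [CommSemiring R] (N m : ℕ) :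
    ((1 + X + X ^ 2 : R[X]) ^ N).coeff m =
      ∑ p ∈ antidiagonal m, ((N.choose p.2 * p.2.choose p.1 : ℕ) : R) := by
  have coeff_term (i : ℕ) : ((X * (1 + X) : R[X]) ^ i * 1 ^ (N - i) * (N.choose i : R[X])).coeff m =
      if i ≤ m then ((N.choose i * i.choose (m - i) : ℕ) : R) else 0 := by
    rw [one_pow, mul_one, coeff_mul_natCast, mul_pow, coeff_X_pow_mul', coeff_one_add_X_pow,
      ite_mul, zero_mul, Nat.cast_mul, mul_comm]
  calc ((1 + X + X ^ 2 : R[X]) ^ N).coeff m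
      = ((X * (1 + X) + 1 : R[X]) ^ N).coeff m := by ring_nf
    _ = ∑ i ∈ range (N + 1) with i ≤ m, ((N.choose i * i.choose (m - i) : ℕ) : R) := by
      simp only [add_pow, finsetSum_coeff, coeff_term, sum_filter]
    _ = ∑ i ∈ range (m + 1), ((N.choose i * i.choose (m - i) : ℕ) : R) := by
      refine sum_subset (fun i => by simp only [mem_filter, mem_range]; lia) fun i hi hiN => ?_
      simp only [mem_filter, mem_range] at hi hiN
      rw [Nat.choose_eq_zero_of_lt (by lia : N < i), zero_mul, Nat.cast_zero]
    _ = _ := by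
      rw [← Finset.Nat.sum_antidiagonal_swap, Nat.sum_antidiagonal_eq_sum_range_succ_mk]
      rfl

theorem coeff_two_mul_one_add_X_add_X_sq_pow {R : Type*} [CommSemiring R] (N m : ℕ) :
    ((1 + X + X ^ 2 : R[X]) ^ N).coeff (2 * m) =
      ∑ j ∈ range (m + 1), ((N.choose (2 * m - j) * (2 * m - j).choose j : ℕ) : R) := by
  rw [coeff_one_add_X_add_X_sq_pow, Nat.sum_antidiagonal_eq_sum_range_succ_mk]
  refine (sum_subset (range_subset_range.mpr (by lia)) fun j _ hj => ?_).symm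
  rw [mem_range] at hj
  rw [Nat.choose_eq_zero_of_lt (by lia : 2 * m - j < j), mul_zero, Nat.cast_zero]

end TrinomialCoefficients

section LastLeader

/-- The leading term of the last maximal weakly increasing contiguous subword of `w 0 ⋯ w i`. -/
def lastLeader (w : ℕ → ℕ) : ℕ → ℕ
  | 0 => w 0
  | i + 1 => if w (i + 1) < w i then w (i + 1) else lastLeader w i

variable {n i j : ℕ} {u w : ℕ → ℕ}

theorem lastLeader_succ_of_lt (h : w (i + 1) < w i) : lastLeader w (i + 1) = w (i + 1) :=
  if_pos h

theorem lastLeader_succ_of_le (h : w i ≤ w (i + 1)) : lastLeader w (i + 1) = lastLeader w i :=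
  if_neg h.not_gt

theorem lastLeader_le (w : ℕ → ℕ) (i : ℕ) : lastLeader w i ≤ w i := by
  induction i with
  | zero => exact le_rfl
  | succ i ih =>
    rcases lt_or_ge (w (i + 1)) (w i) with h | h
    · exact (lastLeader_succ_of_lt h).le
    · exact (lastLeader_succ_of_le h).trans_le (ih.trans h)

theorem lastLeader_congr (h : ∀ j ≤ i, u j = w j) : lastLeader u i = lastLeader w i := by
  induction i with
  | zero => exact h 0 le_rfl
  | succ i ih =>
    simp only [lastLeader, h i (by lia), h (i + 1) le_rfl, ih fun j hj => h j (by lia)]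

theorem lastLeader_update_of_lt (w : ℕ → ℕ) (v : ℕ) (h : i < j) :
    lastLeader (Function.update w j v) i = lastLeader w i :=
  lastLeader_congr fun _ hk => Function.update_of_ne (hk.trans_lt h).ne v w

theorem IsRunStart.lastLeader_eq (h : IsRunStart n w i) : lastLeader w i = w i := by
  cases i with
  | zero => rfl
  | succ i => exact lastLeader_succ_of_lt (h.2.resolve_left i.succ_ne_zero)

theorem exists_isRunStart_eq_lastLeader (w : ℕ → ℕ) (hi : i < n) :
    ∃ j ≤ i, IsRunStart n w j ∧ w j = lastLeader w i := by
  induction i with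
  | zero => exact ⟨0, le_rfl, ⟨hi, Or.inl rfl⟩, rfl⟩
  | succ i ih =>
    rcases lt_or_ge (w (i + 1)) (w i) with h | h
    · exact ⟨i + 1, le_rfl, ⟨hi, Or.inr h⟩, (lastLeader_succ_of_lt h).symm⟩
    · obtain ⟨j, hji, hj, hw⟩ := ih (by lia)
      exact ⟨j, by lia, hj, hw.trans (lastLeader_succ_of_le h).symm⟩

theorem lastLeader_le_lastLeader (h : ∀ i, i + 1 < n → lastLeader w i ≤ w (i + 1)) (hij : i ≤ j)
    (hj : j < n) : lastLeader w i ≤ lastLeader w j := by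
  induction j, hij using Nat.le_induction with
  | base => exact le_rfl
  | succ j _ ih =>
    refine (ih (by lia)).trans ?_
    rcases lt_or_ge (w (j + 1)) (w j) with hlt | hge
    · exact (h j hj).trans_eq (lastLeader_succ_of_lt hlt).symm
    · exact (lastLeader_succ_of_le hge).ge

theorem isFlattened_iff_lastLeader_le :
    IsFlattened n w ↔ ∀ i, i + 1 < n → lastLeader w i ≤ w (i + 1) := by
  constructor
  · intro hw i hi
    rcases lt_or_ge (w (i + 1)) (w i) with h | h
    · obtain ⟨j, hji, hj, hwj⟩ := exists_isRunStart_eq_lastLeader w (Nat.lt_of_succ_lt hi)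
      exact hwj.symm.trans_le (hw j (i + 1) hj ⟨hi, Or.inr h⟩ (by lia))
    · exact (lastLeader_le w i).trans h
  · intro h i j hi hj hij
    rw [← hi.lastLeader_eq, ← hj.lastLeader_eq]
    exact lastLeader_le_lastLeader h hij hj.1

end LastLeader

section Extension

variable {N v : ℕ} {w : ℕ → ℕ}

theorem mem_flatCat_iff {n : ℕ} : w ∈ FlatCat n ↔
    w 0 = 0 ∧ (∀ i, i + 1 < n → w (i + 1) ∈ Icc (lastLeader w i) (w i + 1)) ∧
      ∀ i, n ≤ i → w i = 0 := by
  simp only [FlatCat, Set.mem_ofPred_eq, IsCatalanWord, isFlattened_iff_lastLeader_le, mem_Icc]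
  grind

theorem flatCat_one : FlatCat 1 = {0} := by
  ext w
  rw [mem_flatCat_iff, Set.mem_singleton_iff]
  constructor
  · rintro ⟨h0, -, hw⟩
    exact funext fun i => i.eq_zero_or_pos.elim (fun hi => hi ▸ h0) (hw i)
  · rintro rfl
    simp

theorem update_mem_flatCat_iff (hw : w (N + 1) = 0) :
    Function.update w (N + 1) v ∈ FlatCat (N + 2) ↔
      w ∈ FlatCat (N + 1) ∧ v ∈ Icc (lastLeader w N) (w N + 1) := by
  have letters_iff : (∀ i, i + 1 < N + 2 → Function.update w (N + 1) v (i + 1) ∈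
        Icc (lastLeader (Function.update w (N + 1) v) i) (Function.update w (N + 1) v i + 1)) ↔
      (∀ i, i + 1 < N + 1 → w (i + 1) ∈ Icc (lastLeader w i) (w i + 1)) ∧
        v ∈ Icc (lastLeader w N) (w N + 1) := by
    simp only [Nat.add_lt_add_iff_right, show N + 2 = N + 1 + 1 from rfl,
      Nat.forall_lt_succ_right]
    refine and_congr (forall₂_congr fun i hi => ?_) ?_
    · rw [lastLeader_update_of_lt w v (by lia), Function.update_of_ne (by lia),
        Function.update_of_ne (by lia)]
    · rw [lastLeader_update_of_lt w v N.lt_succ_self, Function.update_self,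
        Function.update_of_ne (by lia)]
  have tail_iff : (∀ i, N + 2 ≤ i → Function.update w (N + 1) v i = 0) ↔
      ∀ i, N + 1 ≤ i → w i = 0 := by
    constructor
    · intro h i hi
      rcases hi.eq_or_lt with rfl | hlt
      · exact hw
      · rw [← h i hlt, Function.update_of_ne hlt.ne']
    · intro h i hi
      rw [Function.update_of_ne (by lia), h i (by lia)]
  rw [mem_flatCat_iff, mem_flatCat_iff, letters_iff, tail_iff, Function.update_of_ne (by lia)]
  tauto

open Classical in
/-- The flattened Catalan words of length `N + 1` as a finset, built by appending letters one at a
time. Encoded words vanish beyond their last letter, so appending `v` to `w 0 ⋯ w N` is an update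
of `w` at `N + 1`. -/
noncomputable def flatCatFinset : ℕ → Finset (ℕ → ℕ)
  | 0 => {0}
  | N + 1 => ((flatCatFinset N).sigma fun w => Icc (lastLeader w N) (w N + 1)).image
      fun p => Function.update p.1 (N + 1) p.2

theorem mem_flatCatFinset : w ∈ flatCatFinset N ↔ w ∈ FlatCat (N + 1) := by
  induction N generalizing w with
  | zero => rw [zero_add, flatCat_one, flatCatFinset, mem_singleton, Set.mem_singleton_iff]
  | succ N ih =>
    simp only [flatCatFinset, mem_image, mem_sigma, ih, Sigma.exists]
    constructor
    · rintro ⟨u, v, huv, rfl⟩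
      exact (update_mem_flatCat_iff ((mem_flatCat_iff.mp huv.1).2.2 _ le_rfl)).mpr huv
    · intro hw
      have hupdate : Function.update (Function.update w (N + 1) 0) (N + 1) (w (N + 1)) = w := by
        rw [Function.update_idem, Function.update_eq_self]
      exact ⟨_, _, (update_mem_flatCat_iff (Function.update_self ..)).mp (by rwa [hupdate]),
        hupdate⟩

theorem sum_flatCatFinset_succ {M : Type*} [AddCommMonoid M] (f : (ℕ → ℕ) → M) (N : ℕ) :
    ∑ w ∈ flatCatFinset (N + 1), f w = ∑ w ∈ flatCatFinset N,
      ∑ v ∈ Icc (lastLeader w N) (w N + 1), f (Function.update w (N + 1) v) := by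
  classical
  rw [flatCatFinset, sum_image, sum_sigma]
  refine (injOn_update_of_apply_eq (N + 1) 0).mono fun p hp => ?_
  exact (mem_flatCat_iff.mp (mem_flatCatFinset.mp (mem_sigma.mp hp).1)).2.2 _ le_rfl

end Extension

section WeakDescents

/-- The number of weak descents `w i ≥ w (i + 1)` of `w 0 ⋯ w N`. -/
def weakDescentCount (w : ℕ → ℕ) (N : ℕ) : ℕ :=
  #{i ∈ range N | w (i + 1) ≤ w i}

theorem weakDescentCount_succ (w : ℕ → ℕ) (N : ℕ) :
    weakDescentCount w (N + 1) = weakDescentCount w N + if w (N + 1) ≤ w N then 1 else 0 := by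
  simp only [weakDescentCount, card_filter, sum_range_succ]

theorem weakDescentCount_update (w : ℕ → ℕ) (N v : ℕ) :
    weakDescentCount (Function.update w (N + 1) v) N = weakDescentCount w N := by
  refine congrArg card (filter_congr fun i hi => ?_)
  rw [mem_range] at hi
  rw [Function.update_of_ne (by lia), Function.update_of_ne (by lia)]

theorem runsAsc_succ (N : ℕ) (w : ℕ → ℕ) : runsAsc (N + 1) w = weakDescentCount w N + 1 := by
  rw [runsAsc, weakDescentCount, ← Set.ncard_coe_finset, add_comm]
  simp

end WeakDescents

section WordWeight

/-- The weight of `w 0 ⋯ w N`. The doubled exponent leaves the odd degrees to the correction term in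
`X`, which makes the total weight multiplicative when a letter is appended. The subtraction
is exact by `lastLeader_le`. -/
noncomputable def wordWeight (N : ℕ) (w : ℕ → ℕ) : ℕ[X] :=
  X ^ (2 * weakDescentCount w N) * (1 + C (w N - lastLeader w N) * X)

theorem coeff_two_mul_wordWeight (N m : ℕ) (w : ℕ → ℕ) :
    (wordWeight N w).coeff (2 * m) = if weakDescentCount w N = m then 1 else 0 := by
  have weight_eq : wordWeight N w = X ^ (2 * weakDescentCount w N) +
      C (w N - lastLeader w N) * X ^ (2 * weakDescentCount w N + 1) := by
    rw [wordWeight]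
    ring
  have parity : 2 * m ≠ 2 * weakDescentCount w N + 1 := by lia
  rw [weight_eq, coeff_add, coeff_X_pow, coeff_C_mul_X_pow, if_neg parity, add_zero]
  simp only [Nat.mul_right_inj two_ne_zero, eq_comm]

variable {N v : ℕ} {w : ℕ → ℕ}

theorem wordWeight_update_of_lt (h : v < w N) :
    wordWeight (N + 1) (Function.update w (N + 1) v) = X ^ (2 * weakDescentCount w N + 2) := by
  have hN : Function.update w (N + 1) v N = w N := Function.update_of_ne (by lia) ..
  have hv : Function.update w (N + 1) v (N + 1) = v := Function.update_self ..
  rw [wordWeight, weakDescentCount_succ, weakDescentCount_update,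
    lastLeader_succ_of_lt (by rwa [hN, hv]), hN, hv, if_pos h.le, Nat.sub_self]
  simp [mul_add]

theorem wordWeight_update_self (N : ℕ) (w : ℕ → ℕ) :
    wordWeight (N + 1) (Function.update w (N + 1) (w N)) = wordWeight N w * X ^ 2 := by
  have hN : Function.update w (N + 1) (w N) N = w N := Function.update_of_ne (by lia) ..
  have hv : Function.update w (N + 1) (w N) (N + 1) = w N := Function.update_self ..
  rw [wordWeight, wordWeight, weakDescentCount_succ, weakDescentCount_update,
    lastLeader_succ_of_le (by rw [hN, hv]), lastLeader_update_of_lt w _ N.lt_succ_self, hN, hv,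
    if_pos le_rfl]
  ring

theorem wordWeight_update_add_one (N : ℕ) (w : ℕ → ℕ) :
    wordWeight (N + 1) (Function.update w (N + 1) (w N + 1)) =
      X ^ (2 * weakDescentCount w N) * (1 + C (w N - lastLeader w N + 1) * X) := by
  have hN : Function.update w (N + 1) (w N + 1) N = w N := Function.update_of_ne (by lia) ..
  have hv : Function.update w (N + 1) (w N + 1) (N + 1) = w N + 1 := Function.update_self ..
  rw [wordWeight, weakDescentCount_succ, weakDescentCount_update,
    lastLeader_succ_of_le (by rw [hN, hv]; lia), lastLeader_update_of_lt w _ N.lt_succ_self, hN,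
    hv, if_neg (by lia), add_zero, Nat.sub_add_comm (lastLeader_le w N)]

theorem sum_wordWeight_update (N : ℕ) (w : ℕ → ℕ) :
    ∑ v ∈ Icc (lastLeader w N) (w N + 1), wordWeight (N + 1) (Function.update w (N + 1) v) =
      wordWeight N w * (1 + X + X ^ 2) := by
  have hle := lastLeader_le w N
  have sum_lt : ∑ v ∈ Ico (lastLeader w N) (w N),
      wordWeight (N + 1) (Function.update w (N + 1) v) =
        C (w N - lastLeader w N) * X ^ (2 * weakDescentCount w N + 2) := by
    rw [sum_congr rfl fun v hv => wordWeight_update_of_lt (mem_Ico.mp hv).2, sum_const,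
      Nat.card_Ico, nsmul_eq_mul, ← C_eq_natCast, Nat.cast_id]
  rw [← Ico_add_one_right_eq_Icc, sum_Ico_succ_top (by lia), sum_Ico_succ_top hle, sum_lt,
    wordWeight_update_self, wordWeight_update_add_one, wordWeight, C_add, C_1]
  ring

theorem sum_wordWeight_flatCatFinset (N : ℕ) :
    ∑ w ∈ flatCatFinset N, wordWeight N w = (1 + X + X ^ 2) ^ N := by
  induction N with
  | zero => simp [flatCatFinset, wordWeight, weakDescentCount, lastLeader]
  | succ N ih => simp only [sum_flatCatFinset_succ, sum_wordWeight_update, ← sum_mul, ih, pow_succ]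

theorem card_filter_weakDescentCount_eq (N m : ℕ) :
    #{w ∈ flatCatFinset N | weakDescentCount w N = m} =
      ((1 + X + X ^ 2 : ℕ[X]) ^ N).coeff (2 * m) := by
  simp only [← sum_wordWeight_flatCatFinset, finsetSum_coeff, coeff_two_mul_wordWeight, card_filter]

end WordWeight

/-- For all `n, k ≥ 1`, the number of flattened Catalan words of length `n`
with exactly `k` runs of ascents equals
`∑_{j=0}^{k-1} C(n-1, 2k-j-2) * C(2k-j-2, j)`. -/
theorem flatCat_runsAsc_card (n k : ℕ) (hn : 1 ≤ n) (hk : 1 ≤ k) :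
    {w ∈ FlatCat n | runsAsc n w = k}.ncard =
      ∑ j ∈ Finset.range k,
        Nat.choose (n - 1) (2 * k - j - 2) * Nat.choose (2 * k - j - 2) j := by
  obtain ⟨N, rfl⟩ := Nat.exists_eq_add_of_le' hn
  obtain ⟨m, rfl⟩ := Nat.exists_eq_add_of_le' hk
  have words_eq : {w ∈ FlatCat (N + 1) | runsAsc (N + 1) w = m + 1} =
      ({w ∈ flatCatFinset N | weakDescentCount w N = m} : Finset (ℕ → ℕ)) := by
    ext w
    simp only [Set.mem_ofPred_eq, coe_filter, mem_flatCatFinset, runsAsc_succ,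
      Nat.add_right_cancel_iff]
  rw [words_eq, Set.ncard_coe_finset, card_filter_weakDescentCount_eq,
    coeff_two_mul_one_add_X_add_X_sq_pow]
  refine sum_congr rfl fun j _ => ?_
  rw [Nat.cast_id, Nat.add_sub_cancel, show 2 * (m + 1) - j - 2 = 2 * m - j by lia]
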